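/- With σ the suspension operation on cubical chains of S¹, the reduced cubical coproduct satisfies δ̄(σ(T)) = Σ σ(T_i) ⊗ Tⁱ, where δ(T) = Σ T_i ⊗ Tⁱ is the cubical Alexander–Whitney coproduct. -/

import Mathlib

open scoped TensorProduct
noncomputable section

/-- An `n`-cube in `X` (set-theoretic model of cubical singular theory). -/
abbrev Cube (X : Type) (n : ℕ) : Type := (Fin n → unitInterval) → X

variable (k : Type) [CommRing k]

/-- The cubical chains in degree `n`: the free `k`-module on `n`-cubes. -/
abbrev CU (X : Type) (n : ℕ) : Type := Cube X n →₀ k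

/-- A cube is degenerate if it does not depend on one of its coordinates. -/
def IsDegenerate {X : Type} {n : ℕ} (T : Cube X n) : Prop :=
  ∃ i : Fin n, ∀ (x : Fin n → unitInterval) (t : unitInterval),
    T (Function.update x i t) = T x

/-- The submodule of degenerate chains. -/
def Deg (X : Type) (n : ℕ) : Submodule k (CU k X n) :=
  Submodule.span k {c : CU k X n | ∃ T, IsDegenerate T ∧ c = Finsupp.single T 1}

/-- Reindexing of cubes along an equality of dimensions. -/
def cubeEquiv {X : Type} {n m : ℕ} (h : n = m) : Cube X n ≃ Cube X m :=
  Equiv.arrowCongr (Equiv.arrowCongr (finCongr h) (Equiv.refl unitInterval)) (Equiv.refl X)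

/-- Reindexing of cubical chains along an equality of dimensions. -/
def CUcast {X : Type} {n m : ℕ} (h : n = m) : CU k X n ≃ₗ[k] CU k X m :=
  Finsupp.domLCongr (cubeEquiv h)

/-- The shuffle sign attached to a subset `A` of the coordinates. -/
def shuffleSign (n : ℕ) (A : Finset (Fin n)) : ℤ :=
  (-1) ^ (((A ×ˢ Aᶜ).filter fun p => p.2 < p.1).card)

/-- The front face of a cube determined by a subset `A` of its coordinates:
the coordinates outside of `A` are set to `0`. -/
def frontFace {X : Type} {n p : ℕ} (A : Finset (Fin n)) (h : A.card = p) (T : Cube X n) :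
    Cube X p :=
  fun x => T fun i => if hi : i ∈ A then x ((A.orderIsoOfFin h).symm ⟨i, hi⟩) else 0

/-- The back face of a cube determined by a subset `B` of its coordinates:
the coordinates outside of `B` are set to `1`. -/
def backFace {X : Type} {n q : ℕ} (B : Finset (Fin n)) (h : B.card = q) (T : Cube X n) :
    Cube X q :=
  fun x => T fun i => if hi : i ∈ B then x ((B.orderIsoOfFin h).symm ⟨i, hi⟩) else 1

/-- The `(p, q)`-component of the cubical Alexander–Whitney coproduct. -/
def δcomp {X : Type} (p q : ℕ) : CU k X (p + q) →ₗ[k] CU k X p ⊗[k] CU k X q :=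
  Finsupp.lift (CU k X p ⊗[k] CU k X q) k (Cube X (p + q)) fun T =>
    ∑ A ∈ (Finset.univ.filter fun A : Finset (Fin (p + q)) => A.card = p).attach,
      shuffleSign (p + q) A.1 •
        (Finsupp.single (frontFace A.1 (Finset.mem_filter.mp A.2).2 T) (1 : k) ⊗ₜ[k]
          Finsupp.single (backFace A.1ᶜ
            (show A.1ᶜ.card = q by
              have h := (Finset.mem_filter.mp A.2).2
              rw [Finset.card_compl, h, Fintype.card_fin]; omega) T) (1 : k))

/-- The "power" `z ^ t` of a point of the circle, using the principal argument. -/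
def cpow (z : Circle) (t : ℝ) : Circle := Circle.exp (t * Complex.arg (z : ℂ))

/-- The suspension operation on cubes of the circle. -/
def σcube {n : ℕ} (T : Cube Circle n) : Cube Circle (n + 1) :=
  fun x => cpow (T (Fin.tail x)) (x 0 : ℝ)

/-- The suspension operation, extended linearly to cubical chains. -/
def σc (n : ℕ) : CU k Circle n →ₗ[k] CU k Circle (n + 1) :=
  Finsupp.lift (CU k Circle (n + 1)) k (Cube Circle n) fun T =>
    Finsupp.single (σcube T) 1

/-- The degenerate part of a tensor product of chain groups. -/
def DegT (X : Type) (p q : ℕ) : Submodule k (CU k X p ⊗[k] CU k X q) :=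
  LinearMap.range (TensorProduct.map (Deg k X p).subtype (LinearMap.id (M := CU k X q))) ⊔
    LinearMap.range (TensorProduct.map (LinearMap.id (M := CU k X p)) (Deg k X q).subtype)

/-!
The subsets `A` of the `n + 1` coordinates of a suspension `σ T` are of two kinds. If `A` omits the
suspension coordinate `0`, the front face sets that coordinate to `0`, where the suspension is
constant, so the front face is degenerate. Otherwise `A` consists of `0` and the shift of a subset
`B` of the coordinates of `T`: the front face is then the suspension of a front face of `T`, while
the back face sets the coordinate `0` to `1`, where the suspension is the identity, and so is a back
face of `T`. As `0` precedes every other coordinate, it adds no inversion and the shuffle signs of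
`A` and `B` agree. Of the power map `z ^ t` this uses only that `z ^ 0` is constant and `z ^ 1 = z`,
so any contraction of any space can take its place.
-/

lemma map_sub_map_mem_of_forall_single {R ι M : Type*} [Ring R] [AddCommGroup M] [Module R M]
    {N : Submodule R M} {f g : (ι →₀ R) →ₗ[R] M}
    (h : ∀ i, f (Finsupp.single i 1) - g (Finsupp.single i 1) ∈ N) (c : ι →₀ R) :
    f c - g c ∈ N := by
  have mkQ_comp_eq : N.mkQ ∘ₗ f = N.mkQ ∘ₗ g :=
    Finsupp.lhom_ext' fun i => LinearMap.ext_ring ((Submodule.Quotient.eq N).mpr (h i))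
  exact (Submodule.Quotient.eq N).mp (LinearMap.congr_fun mkQ_comp_eq c)

section Subsets

variable {n p : ℕ}

lemma zero_notMem_map_succEmb (B : Finset (Fin n)) : 0 ∉ B.map (Fin.succEmb n) := by
  simp [Fin.succ_ne_zero]

lemma card_insert_zero_map_succEmb (B : Finset (Fin n)) :
    (insert 0 (B.map (Fin.succEmb n))).card = B.card + 1 := by
  rw [Finset.card_insert_of_notMem (zero_notMem_map_succEmb B), Finset.card_map]

lemma compl_insert_zero_map_succEmb (B : Finset (Fin n)) :
    (insert 0 (B.map (Fin.succEmb n)))ᶜ = Bᶜ.map (Fin.succEmb n) := by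
  ext i
  cases i using Fin.cases <;> simp [Fin.succ_ne_zero]

lemma sum_finset_fin_succ {M : Type*} [AddCommMonoid M] (f : Finset (Fin (n + 1)) → M) :
    ∑ A, f A = ∑ B : Finset (Fin n), f (B.map (Fin.succEmb n)) +
      ∑ B : Finset (Fin n), f (insert 0 (B.map (Fin.succEmb n))) := by
  have sum_powerset_shift (g : Finset (Fin (n + 1)) → M) :
      ∑ A ∈ (Finset.univ.map (Fin.succEmb n)).powerset, g A =
        ∑ B : Finset (Fin n), g (B.map (Fin.succEmb n)) := by
    simp_rw [Finset.map_eq_image]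
    rw [Finset.powerset_image, Finset.powerset_univ, Finset.sum_image]
    exact (Finset.image_injective (Fin.succEmb n).injective).injOn
  have univ_eq : Finset.univ = insert 0 (Finset.univ.map (Fin.succEmb n)) :=
    (Fin.univ_succ n).trans (Finset.cons_eq_insert _ _ _)
  rw [← Finset.powerset_univ, univ_eq, Finset.sum_powerset_insert (zero_notMem_map_succEmb _),
    sum_powerset_shift, sum_powerset_shift]

lemma shuffleSign_insert_zero_map_succEmb (B : Finset (Fin n)) :
    shuffleSign (n + 1) (insert 0 (B.map (Fin.succEmb n))) = shuffleSign n B := by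
  have inversions_eq :
      (insert 0 (B.map (Fin.succEmb n)) ×ˢ Bᶜ.map (Fin.succEmb n)).filter (fun p => p.2 < p.1) =
        ((B ×ˢ Bᶜ).filter fun p => p.2 < p.1).map
          ((Fin.succEmb n).prodMap (Fin.succEmb n)) := by
    ext ⟨i, j⟩
    cases i using Fin.cases <;> cases j using Fin.cases <;> simp [Fin.succ_ne_zero]
  rw [shuffleSign, compl_insert_zero_map_succEmb, inversions_eq, Finset.card_map, shuffleSign]

lemma orderEmbOfFin_map_succEmb (B : Finset (Fin n)) (h : B.card = p) (j : Fin p) :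
    (B.map (Fin.succEmb n)).orderEmbOfFin ((Finset.card_map _).trans h) j =
      (B.orderEmbOfFin h j).succ :=
  (congrFun (Finset.orderEmbOfFin_unique _
    (fun i => Finset.mem_map_of_mem (Fin.succEmb n) (B.orderEmbOfFin_mem h i))
    (Fin.strictMono_succ.comp (B.orderEmbOfFin h).strictMono)) j).symm

lemma orderEmbOfFin_insert_zero_map_succEmb (B : Finset (Fin n)) (h : B.card = p) :
    ⇑((insert 0 (B.map (Fin.succEmb n))).orderEmbOfFin
        ((card_insert_zero_map_succEmb B).trans (congrArg (· + 1) h))) =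
      Fin.cons 0 fun j => (B.orderEmbOfFin h j).succ := by
  refine (Finset.orderEmbOfFin_unique _ (fun j => ?_) fun i j hij => ?_).symm
  · cases j using Fin.cases with
    | zero => exact Finset.mem_insert_self _ _
    | succ j =>
      exact Finset.mem_insert_of_mem
        (Finset.mem_map_of_mem (Fin.succEmb n) (B.orderEmbOfFin_mem h j))
  · cases j using Fin.cases with
    | zero => exact absurd hij (Fin.not_lt_zero i)
    | succ j =>
      cases i using Fin.cases with
      | zero => exact Fin.succ_pos _
      | succ i => simpa using hij

end Subsets

section Faces

variable {α : Type*} {n p : ℕ}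

/-- The point of `αⁿ` whose coordinates in `A`, in increasing order, are those of `x`, and whose
other coordinates are `a`. Both `frontFace A h T` and `backFace A h T` are by definition the
composite of `T` with such a map, for `a = 0` and `a = 1` respectively. -/
def fillCoords (A : Finset (Fin n)) (h : A.card = p) (a : α) (x : Fin p → α) : Fin n → α :=
  fun i => if hi : i ∈ A then x ((A.orderIsoOfFin h).symm ⟨i, hi⟩) else a

lemma fillCoords_orderEmbOfFin (A : Finset (Fin n)) (h : A.card = p) (a : α) (x : Fin p → α)
    (j : Fin p) : fillCoords A h a x (A.orderEmbOfFin h j) = x j :=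
  (dif_pos (A.orderEmbOfFin_mem h j)).trans
    (congrArg x ((A.orderIsoOfFin h).symm_apply_apply j))

lemma fillCoords_of_notMem {A : Finset (Fin n)} {i : Fin n} (hi : i ∉ A) (h : A.card = p) (a : α)
    (x : Fin p → α) : fillCoords A h a x i = a :=
  dif_neg hi

lemma fillCoords_eq (A : Finset (Fin n)) (h : A.card = p) {a : α} {x : Fin p → α} {y : Fin n → α}
    (hmem : ∀ j, y (A.orderEmbOfFin h j) = x j) (hnotMem : ∀ i ∉ A, y i = a) :
    fillCoords A h a x = y := by
  funext i
  by_cases hi : i ∈ A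
  · obtain ⟨j, rfl⟩ : i ∈ Set.range (A.orderEmbOfFin h) := by
      rwa [Finset.range_orderEmbOfFin, Finset.mem_coe]
    rw [fillCoords_orderEmbOfFin, hmem]
  · rw [fillCoords_of_notMem hi, hnotMem i hi]

lemma fillCoords_map_succEmb (B : Finset (Fin n)) (h : B.card = p) (a : α) (x : Fin p → α) :
    fillCoords (B.map (Fin.succEmb n)) ((Finset.card_map _).trans h) a x =
      Fin.cons a (fillCoords B h a x) := by
  refine fillCoords_eq _ _ (fun j => ?_) (Fin.cases (fun _ => rfl) fun i hi => ?_)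
  · rw [orderEmbOfFin_map_succEmb B h, Fin.cons_succ, fillCoords_orderEmbOfFin]
  · rw [Fin.cons_succ, fillCoords_of_notMem fun hB => hi (Finset.mem_map_of_mem _ hB)]

lemma fillCoords_insert_zero_map_succEmb (B : Finset (Fin n)) (h : B.card = p) (a : α)
    (x : Fin (p + 1) → α) :
    fillCoords (insert 0 (B.map (Fin.succEmb n)))
        ((card_insert_zero_map_succEmb B).trans (congrArg (· + 1) h)) a x =
      Fin.cons (x 0) (fillCoords B h a (Fin.tail x)) := by
  refine fillCoords_eq _ _ (fun j => ?_) (Fin.cases (fun h₀ => ?_) fun i hi => ?_)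
  · rw [orderEmbOfFin_insert_zero_map_succEmb B h]
    cases j using Fin.cases with
    | zero => rfl
    | succ j => exact fillCoords_orderEmbOfFin B h a (Fin.tail x) j
  · exact absurd (Finset.mem_insert_self _ _) h₀
  · rw [Fin.cons_succ, fillCoords_of_notMem fun hB =>
      hi (Finset.mem_insert_of_mem (Finset.mem_map_of_mem _ hB))]

end Faces

section Cone

variable {X : Type} {n p : ℕ} (H : X → unitInterval → X)

/-- The cone on a cube with respect to a contraction `H` of `X`, the time of `H` being the new
coordinate `0`. For `H z t = z ^ t` on the circle this is the suspension `σcube`. -/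
def coneCube (T : Cube X n) : Cube X (n + 1) :=
  fun x => H (T (Fin.tail x)) (x 0)

/-- The cone operator on cubical chains, the linear extension of `coneCube`. -/
def coneChain (n : ℕ) : CU k X n →ₗ[k] CU k X (n + 1) :=
  Finsupp.lift (CU k X (n + 1)) k (Cube X n) fun T => Finsupp.single (coneCube H T) 1

lemma coneChain_single (T : Cube X n) :
    coneChain k H n (Finsupp.single T 1) = Finsupp.single (coneCube H T) 1 := by
  simp [coneChain]

lemma frontFace_insert_zero_coneCube (B : Finset (Fin n)) (h : B.card = p) (T : Cube X n) :
    frontFace (insert 0 (B.map (Fin.succEmb n)))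
        ((card_insert_zero_map_succEmb B).trans (congrArg (· + 1) h)) (coneCube H T) =
      coneCube H (frontFace B h T) :=
  funext fun x => congrArg (coneCube H T) (fillCoords_insert_zero_map_succEmb B h 0 x)

variable {H}

lemma backFace_map_succEmb_coneCube (h₁ : ∀ x, H x 1 = x) (B : Finset (Fin n)) (h : B.card = p)
    (T : Cube X n) :
    backFace (B.map (Fin.succEmb n)) ((Finset.card_map _).trans h) (coneCube H T) =
      backFace B h T :=
  funext fun x => (congrArg (coneCube H T) (fillCoords_map_succEmb B h 1 x)).trans (h₁ _)

lemma isDegenerate_const (x₀ : X) : IsDegenerate fun _ : Fin (n + 1) → unitInterval => x₀ :=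
  ⟨0, fun _ _ => rfl⟩

lemma frontFace_coneCube_of_zero_notMem {x₀ : X} (h₀ : ∀ x, H x 0 = x₀)
    {A : Finset (Fin (n + 1))} (hA : 0 ∉ A) (h : A.card = p) (T : Cube X n) :
    frontFace A h (coneCube H T) = fun _ => x₀ := by
  funext x
  have time_eq_zero : fillCoords A h 0 x 0 = 0 := fillCoords_of_notMem hA h 0 x
  exact (congrArg (H _) time_eq_zero).trans (h₀ _)

end Cone

section Coproduct

variable {X : Type} {n p q : ℕ}

lemma backFace_congr {B C : Finset (Fin n)} (hBC : B = C) (hB : B.card = q) (T : Cube X n) :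
    backFace B hB T = backFace C (hBC ▸ hB) T := by
  subst hBC
  rfl

/-- The summand of the Alexander–Whitney coproduct of `T` indexed by a subset `A` of the
coordinates. It is `0` unless `A` has `p` elements, so that `δcomp` becomes a sum over all subsets;
allowing `n` to differ from `p + q` syntactically absorbs the reindexing `CUcast`. -/
def alexanderWhitneyTerm (h : n = p + q) (T : Cube X n) (A : Finset (Fin n)) :
    CU k X p ⊗[k] CU k X q :=
  if hA : A.card = p then
    shuffleSign n A • (Finsupp.single (frontFace A hA T) (1 : k) ⊗ₜ[k]
      Finsupp.single (backFace Aᶜ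
        (show Aᶜ.card = q by rw [Finset.card_compl, hA, Fintype.card_fin]; omega) T) (1 : k))
  else 0

lemma δcomp_single (T : Cube X (p + q)) :
    δcomp k p q (Finsupp.single T 1) = ∑ A, alexanderWhitneyTerm k rfl T A := by
  have card_eq (A : Finset (Fin (p + q))) (hA : alexanderWhitneyTerm k rfl T A ≠ 0) :
      A.card = p := by
    by_contra hcard
    exact hA (dif_neg hcard)
  rw [← Finset.sum_filter_of_ne fun A _ => card_eq A, ← Finset.sum_attach]
  simp only [δcomp, Finsupp.lift_apply, zero_smul, Finsupp.sum_single_index, one_smul]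
  refine Finset.sum_congr rfl fun A _ => ?_
  rw [alexanderWhitneyTerm, dif_pos (Finset.mem_filter.mp A.2).2]

lemma δcomp_CUcast_single (h : n = p + q) (T : Cube X n) :
    δcomp k p q (CUcast k h (Finsupp.single T 1)) = ∑ A, alexanderWhitneyTerm k h T A := by
  subst h
  rw [← δcomp_single, CUcast, Finsupp.domLCongr_single]
  rfl

lemma single_tmul_mem_DegT {S : Cube X p} (hS : IsDegenerate S) (d : CU k X q) :
    Finsupp.single S (1 : k) ⊗ₜ[k] d ∈ DegT k X p q :=
  Submodule.mem_sup_left ⟨⟨Finsupp.single S 1, Submodule.subset_span ⟨S, hS, rfl⟩⟩ ⊗ₜ[k] d, rfl⟩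

variable {H : X → unitInterval → X} {x₀ : X}

lemma alexanderWhitneyTerm_coneCube_mem_DegT (h₀ : ∀ x, H x 0 = x₀) (h : n + 1 = p + 1 + q)
    (T : Cube X n) {A : Finset (Fin (n + 1))} (hA : 0 ∉ A) :
    alexanderWhitneyTerm k h (coneCube H T) A ∈ DegT k X (p + 1) q := by
  unfold alexanderWhitneyTerm
  split_ifs with hcard
  · rw [frontFace_coneCube_of_zero_notMem h₀ hA, ← Int.cast_smul_eq_zsmul k]
    exact Submodule.smul_mem _ _ (single_tmul_mem_DegT k (isDegenerate_const x₀) _)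
  · exact zero_mem _

lemma alexanderWhitneyTerm_coneCube_insert_zero (h₁ : ∀ x, H x 1 = x) (T : Cube X (p + q))
    (B : Finset (Fin (p + q))) :
    alexanderWhitneyTerm k (Nat.add_right_comm p q 1) (coneCube H T)
        (insert 0 (B.map (Fin.succEmb _))) =
      TensorProduct.map (coneChain k H p) LinearMap.id (alexanderWhitneyTerm k rfl T B) := by
  unfold alexanderWhitneyTerm
  have card_iff : (insert 0 (B.map (Fin.succEmb _))).card = p + 1 ↔ B.card = p := by
    rw [card_insert_zero_map_succEmb, Nat.add_right_cancel_iff]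
  by_cases hB : B.card = p
  · rw [dif_pos hB, dif_pos (card_iff.mpr hB), map_zsmul, TensorProduct.map_tmul,
      coneChain_single, LinearMap.id_apply, shuffleSign_insert_zero_map_succEmb,
      frontFace_insert_zero_coneCube H B hB, backFace_congr (compl_insert_zero_map_succEmb B),
      backFace_map_succEmb_coneCube h₁]
  · rw [dif_neg hB, dif_neg (card_iff.not.mpr hB), map_zero]

lemma δcomp_coneCube (h₁ : ∀ x, H x 1 = x) (T : Cube X (p + q)) :
    δcomp k (p + 1) q
        (CUcast k (Nat.add_right_comm p q 1) (Finsupp.single (coneCube H T) 1)) =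
      ∑ B : Finset (Fin (p + q)),
          alexanderWhitneyTerm k (Nat.add_right_comm p q 1) (coneCube H T)
            (B.map (Fin.succEmb _)) +
        TensorProduct.map (coneChain k H p) LinearMap.id (δcomp k p q (Finsupp.single T 1)) := by
  rw [δcomp_CUcast_single, δcomp_single, sum_finset_fin_succ, map_sum,
    Finset.sum_congr rfl fun B _ => alexanderWhitneyTerm_coneCube_insert_zero k h₁ T B]

lemma δcomp_coneCube_sub_mem_DegT (h₀ : ∀ x, H x 0 = x₀) (h₁ : ∀ x, H x 1 = x)
    (T : Cube X (p + q)) :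
    δcomp k (p + 1) q
        (CUcast k (Nat.add_right_comm p q 1) (Finsupp.single (coneCube H T) 1)) -
      TensorProduct.map (coneChain k H p) LinearMap.id (δcomp k p q (Finsupp.single T 1))
      ∈ DegT k X (p + 1) q := by
  rw [sub_eq_of_eq_add (δcomp_coneCube k h₁ T)]
  exact sum_mem fun B _ =>
    alexanderWhitneyTerm_coneCube_mem_DegT k h₀ _ T (zero_notMem_map_succEmb B)

end Coproduct

theorem stmt13_general {X : Type} {H : X → unitInterval → X} {x₀ : X} (h₀ : ∀ x, H x 0 = x₀)
    (h₁ : ∀ x, H x 1 = x) (p q : ℕ) (c : CU k X (p + q)) :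
    δcomp k (p + 1) q (CUcast k (Nat.add_right_comm p q 1) (coneChain k H (p + q) c)) -
      TensorProduct.map (coneChain k H p) LinearMap.id (δcomp k p q c)
      ∈ DegT k X (p + 1) q := by
  refine map_sub_map_mem_of_forall_single
    (M := CU k X (p + 1) ⊗[k] CU k X q) (N := DegT k X (p + 1) q)
    (f := δcomp k (p + 1) q ∘ₗ (CUcast k _).toLinearMap ∘ₗ coneChain k H (p + q))
    (g := TensorProduct.map (coneChain k H p) (LinearMap.id (M := CU k X q)) ∘ₗ δcomp k p q)
    (fun T => ?_) c
  simp only [LinearMap.comp_apply, LinearEquiv.coe_coe, coneChain_single]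
  exact δcomp_coneCube_sub_mem_DegT k h₀ h₁ T

lemma cpow_zero (z : Circle) : cpow z 0 = 1 := by simp [cpow]

lemma cpow_one (z : Circle) : cpow z 1 = z := by simp [cpow, Circle.exp_arg]

/-- Lemma, part (2): the reduced cubical coproduct satisfies
`δ̄(σ(T)) = Σ σ(T_i) ⊗ Tⁱ` where `δ(T) = Σ T_i ⊗ Tⁱ`: componentwise, for every output
bidegree `(p+1, q)` with `q ≥ 1`, the `(p+1, q)`-component of `δ(σ c)` agrees with
`(σ ⊗ 1)` applied to the `(p, q)`-component of `δ c`, modulo degenerate chains. -/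
theorem stmt13 (p q : ℕ) (hq : 1 ≤ q) (c : CU k Circle (p + q)) :
    δcomp k (p + 1) q
        (CUcast k (show p + q + 1 = p + 1 + q by omega) (σc k (p + q) c)) -
      TensorProduct.map (σc k p) (LinearMap.id (M := CU k Circle q)) (δcomp k p q c)
      ∈ DegT k Circle (p + 1) q :=
  stmt13_general k (H := fun z t => cpow z t) cpow_zero cpow_one p q c
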